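/- Let T : ℂ[x_1,…,x_d] → ℂ be a pseudo-positive definite functional and let σ_{k,l}, k ∈ ℕ₀, l = 1,…,a_k, be non-negative measures with supports in [0,∞) representing T, i.e. T(f) = Σ_{k=0}^{deg f} Σ_{l=1}^{a_k} ∫_0^∞ f_{k,l}(r) r^{-k} dσ_{k,l}(r) for all polynomials f. If for every N ∈ ℕ₀ one has Σ_{k=0}^∞ Σ_{l=1}^{a_k} ∫_0^∞ r^N r^{-k} dσ_{k,l}(r) < ∞, then there exists a pseudo-positive, signed moment measure σ on ℝ^d such that T(f) = ∫_{ℝ^d} f dσ for all polynomials f. -/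

import Mathlib

open MeasureTheory MvPolynomial Metric
open scoped ComplexOrder ENNReal

noncomputable section

/-- `d`-dimensional Euclidean space. -/
abbrev E (d : ℕ) := EuclideanSpace ℝ (Fin d)

/-- The (surface) measure `dθ` on the unit sphere `S^{d-1}`. -/
noncomputable def sphMeas (d : ℕ) : Measure (sphere (0 : E d) 1) :=
  (volume : Measure (E d)).toSphere

/-- A bundled orthonormal basis `Y_{k,l}`, `l = 1,…,a_k`, of the spaces `H_k(ℝ^d)` of
real-valued harmonic polynomials homogeneous of degree `k`, orthonormal with respect to
`⟨f,g⟩ = ∫_{S^{d-1}} f g dθ`. -/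
structure HarmonicBasis (d : ℕ) where
  a : ℕ → ℕ
  Y : (k : ℕ) → Fin (a k) → MvPolynomial (Fin d) ℝ
  harmonic : ∀ k l, (∑ i, pderiv i (pderiv i (Y k l))) = 0
  homogeneous : ∀ k l, (Y k l).IsHomogeneous k
  orthonormal : ∀ (k k' : ℕ) (l : Fin (a k)) (l' : Fin (a k')),
    (∫ θ : sphere (0 : E d) 1,
        (eval (fun i => (θ : E d) i) (Y k l)) * (eval (fun i => (θ : E d) i) (Y k' l'))
      ∂(sphMeas d)) = if k = k' ∧ (l : ℕ) = (l' : ℕ) then 1 else 0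
  complete : ∀ (k : ℕ) (P : MvPolynomial (Fin d) ℝ),
    (∑ i, pderiv i (pderiv i P)) = 0 → P.IsHomogeneous k →
      P ∈ Submodule.span ℝ (Set.range (Y k))

/-- Evaluation of a complex polynomial in `d` variables at a point of `ℝ^d`. -/
def evalC {d : ℕ} (P : MvPolynomial (Fin d) ℂ) (x : E d) : ℂ :=
  eval (fun i => (x i : ℂ)) P

/-- The polynomial `|x|² = x₁² + … + x_d²`. -/
def normSqP (d : ℕ) : MvPolynomial (Fin d) ℂ := ∑ i, X i ^ 2

/-- Integral of a (complex- or real-valued) function with respect to a signed measure,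
via the Jordan decomposition. -/
noncomputable def sInt {α : Type*} {G : Type*} [MeasurableSpace α] [NormedAddCommGroup G]
    [NormedSpace ℝ G] (μ : SignedMeasure α) (f : α → G) : G :=
  (∫ x, f x ∂μ.toJordanDecomposition.posPart) - ∫ x, f x ∂μ.toJordanDecomposition.negPart

/-- A signed measure is a moment measure if every polynomial is integrable with respect to
its total variation. -/
def IsMomentMeasure {d : ℕ} (μ : SignedMeasure (E d)) : Prop :=
  ∀ P : MvPolynomial (Fin d) ℂ, Integrable (evalC P) μ.totalVariation

namespace HarmonicBasis

variable {d : ℕ} (B : HarmonicBasis d)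

/-- `Y_{k,l}` as a function on `ℝ^d`. -/
def Yf (k : ℕ) (l : Fin (B.a k)) (x : E d) : ℝ := eval (fun i => x i) (B.Y k l)

/-- `Y_{k,l}` as a complex polynomial. -/
def YC (k : ℕ) (l : Fin (B.a k)) : MvPolynomial (Fin d) ℂ :=
  (B.Y k l).map (algebraMap ℝ ℂ)

/-- The Laplace–Fourier coefficient `f_{k,l}(r) = ∫_{S^{d-1}} f(rθ) Y_{k,l}(θ) dθ`. -/
noncomputable def lfCoeff (f : E d → ℂ) (k : ℕ) (l : Fin (B.a k)) (r : ℝ) : ℂ :=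
  ∫ θ : sphere (0 : E d) 1, f (r • (θ : E d)) * (B.Yf k l (θ : E d) : ℂ) ∂(sphMeas d)

/-- `GaussDecomp B f K p` : `p` is a Gauss (Laplace–Fourier) decomposition of the polynomial
`f`, i.e. `f(x) = ∑_{k=0}^{K} ∑_{l=1}^{a_k} p_{k,l}(|x|²) Y_{k,l}(x)` with `p_{k,l} = 0` for
`k > K`. -/
def GaussDecomp (f : MvPolynomial (Fin d) ℂ) (K : ℕ)
    (p : (k : ℕ) → Fin (B.a k) → Polynomial ℂ) : Prop :=
  (∀ k, K < k → ∀ l, p k l = 0) ∧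
    f = ∑ k ∈ Finset.range (K + 1), ∑ l,
      Polynomial.aeval (normSqP d) (p k l) * B.YC k l

/-- The component functional `T_{k,l}(p) = T(p(|x|²) Y_{k,l}(x))`. -/
def component (T : MvPolynomial (Fin d) ℂ → ℂ) (k : ℕ) (l : Fin (B.a k))
    (p : Polynomial ℂ) : ℂ :=
  T (Polynomial.aeval (normSqP d) p * B.YC k l)

/-- A functional `T` on `ℂ[x₁,…,x_d]` is pseudo-positive definite (w.r.t. the basis `Y_{k,l}`)
if `T_{k,l}(p* p) ≥ 0` and `T_{k,l}(t · p*(t) p(t)) ≥ 0` for all univariate `p` and all `k, l`. -/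
def PPD (T : MvPolynomial (Fin d) ℂ → ℂ) : Prop :=
  ∀ (k : ℕ) (l : Fin (B.a k)) (p : Polynomial ℂ),
    0 ≤ B.component T k l (p.map (starRingEnd ℂ) * p) ∧
    0 ≤ B.component T k l (Polynomial.X * (p.map (starRingEnd ℂ) * p))

/-- A signed measure `μ` on `ℝ^d` is pseudo-positive (w.r.t. the basis `Y_{k,l}`) if
`∫ h(|x|) Y_{k,l}(x) dμ ≥ 0` for every non-negative continuous compactly supported `h`. -/
def PseudoPositive (μ : SignedMeasure (E d)) : Prop :=
  ∀ (k : ℕ) (l : Fin (B.a k)) (h : ℝ → ℝ), Continuous h → HasCompactSupport h →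
    (∀ t, 0 ≤ h t) → 0 ≤ sInt μ (fun x => h ‖x‖ * B.Yf k l x)

/-- `ν` is the family of component measures `μ_{k,l}` of the signed measure `μ`, i.e.
`∫_0^∞ h dμ_{k,l} = ∫_{ℝ^d} h(|x|) Y_{k,l}(x) dμ` for all continuous compactly supported `h`. -/
def IsComponentFamily (μ : SignedMeasure (E d))
    (ν : (k : ℕ) → Fin (B.a k) → Measure ℝ) : Prop :=
  ∀ k l, (ν k l) (Set.Iio 0) = 0 ∧
    ∀ h : ℝ → ℝ, Continuous h → HasCompactSupport h →
      ∫ t, h t ∂(ν k l) = sInt μ (fun x => h ‖x‖ * B.Yf k l x)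

/-- The summability condition `C_N = ∑_{k,l} ∫_0^∞ r^N r^{-k} dσ_{k,l}(r) < ∞` for all `N`. -/
def SummCond (σ : (k : ℕ) → Fin (B.a k) → Measure ℝ) : Prop :=
  ∀ N : ℕ, (∑' k : ℕ, ∑ l, ∫⁻ r, (ENNReal.ofReal r) ^ N * ((ENNReal.ofReal r) ^ k)⁻¹
    ∂(σ k l)) < ⊤

end HarmonicBasis

/-- The set `W_τ^{Sti}` of all non-negative moment measures on `[0,∞)` having the same
moments as `τ`. -/
def WSti (τ : Measure ℝ) : Set (Measure ℝ) :=
  {ρ | ρ (Set.Iio 0) = 0 ∧ (∀ m : ℕ, Integrable (fun t => t ^ m) ρ) ∧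
    ∀ m : ℕ, ∫ t, t ^ m ∂ρ = ∫ t, t ^ m ∂τ}

/-- A measure `ν` on `[0,∞)` is determined in the sense of Stieltjes if it is the only
non-negative measure on `[0,∞)` with its moments. -/
def StieltjesDeterminate (ν : Measure ℝ) : Prop :=
  ∀ τ : Measure ℝ, τ ∈ WSti ν → τ = ν

/-!
The measure `μ` is built in polar coordinates: it is the sum over `k, l` of the images under
`(r, θ) ↦ rθ` of `r^{-k} Y_{k,l}(θ) dσ_{k,l}(r) dθ`. On the unit sphere `|Y_{k,l}| ≤ 1 + Y_{k,l}²`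
and `Y_{k,l}` has `L²` norm one, so the total variation of each summand is controlled uniformly in
`k, l`, and the summability hypothesis at exponent `N` bounds the `N`-th absolute moment of the sum.
Orthonormality singles out one summand when `g(|x|) Y_{k,l}(x)` is integrated, and homogeneity of
degree `k` cancels the factor `r^{-k}`, leaving `∫ g dσ_{k,l}`. Hence `μ` is pseudo-positive and
agrees with `T` on the products `|x|^{2j} Y_{k,l}(x)`. These span all polynomials, by the Gauss
decomposition: if `P` is homogeneous, `ΔP` may be assumed decomposed, and since `Δ(|x|^{2j+2} h)`
is a nonzero multiple of `|x|^{2j} h` for `h ≠ 0` harmonic and homogeneous, some decomposed `Q` has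
`ΔQ = ΔP`, so that `P - Q` is harmonic.
-/

section Laplacian

variable {ι R : Type*} [Fintype ι] [CommSemiring R]

/-- The Laplacian `∑ i, ∂ᵢ²` as a linear endomorphism of the polynomial ring. -/
def polyLaplacian (ι R : Type*) [Fintype ι] [CommSemiring R] :
    MvPolynomial ι R →ₗ[R] MvPolynomial ι R :=
  ∑ i, (pderiv i).toLinearMap ∘ₗ (pderiv i).toLinearMap

theorem polyLaplacian_apply (P : MvPolynomial ι R) :
    polyLaplacian ι R P = ∑ i, pderiv i (pderiv i P) := by
  simp [polyLaplacian]

theorem isHomogeneous_psum (n : ℕ) : (psum ι R n).IsHomogeneous n :=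
  .sum _ _ _ fun i _ => isHomogeneous_X_pow i n

theorem pderiv_psum_two (i : ι) : pderiv i (psum ι R 2) = 2 * X i := by
  classical
  simp [psum, Derivation.leibniz_pow, pderiv_X, Pi.single_apply]

theorem isHomogeneous_polyLaplacian {n : ℕ} {P : MvPolynomial ι R} (hP : P.IsHomogeneous n) :
    (polyLaplacian ι R P).IsHomogeneous (n - 2) := by
  rw [polyLaplacian_apply]
  exact .sum _ _ _ fun i _ => hP.pderiv.pderiv

theorem polyLaplacian_eq_zero_of_lt_two {n : ℕ} (hn : n < 2) {P : MvPolynomial ι R}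
    (hP : P.IsHomogeneous n) : polyLaplacian ι R P = 0 := by
  rw [polyLaplacian_apply]
  refine Finset.sum_eq_zero fun i _ => ?_
  have hconst : (pderiv i P).IsHomogeneous 0 := by
    simpa only [show n - 1 = 0 by lia] using hP.pderiv (i := i)
  rw [← totalDegree_zero_iff_isHomogeneous, totalDegree_eq_zero_iff_eq_C] at hconst
  rw [hconst, pderiv_C]

theorem polyLaplacian_psum_two_mul {n : ℕ} {Q : MvPolynomial ι R} (hQ : Q.IsHomogeneous n) :
    polyLaplacian ι R (psum ι R 2 * Q) =
      (2 * Fintype.card ι + 4 * n) • Q + psum ι R 2 * polyLaplacian ι R Q := by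
  have hpderiv_two (i : ι) : pderiv i (2 : MvPolynomial ι R) = 0 :=
    (pderiv i).map_natCast 2
  have hsecond (i : ι) : pderiv i (pderiv i (psum ι R 2 * Q)) =
      2 * Q + 4 * (X i * pderiv i Q) + psum ι R 2 * pderiv i (pderiv i Q) := by
    simp only [Derivation.leibniz, pderiv_psum_two, map_add, smul_eq_mul, hpderiv_two,
      pderiv_X_self]
    ring
  simp only [polyLaplacian_apply, hsecond, Finset.sum_add_distrib, ← Finset.mul_sum,
    hQ.sum_X_mul_pderiv, Finset.sum_const, Finset.card_univ, nsmul_eq_mul]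
  push_cast
  ring

/-- The harmonic polynomials that are homogeneous of degree `m`. -/
def harmonicSubmodule (ι R : Type*) [Fintype ι] [CommSemiring R] (m : ℕ) :
    Submodule R (MvPolynomial ι R) :=
  homogeneousSubmodule ι R m ⊓ LinearMap.ker (polyLaplacian ι R)

theorem polyLaplacian_psum_two_pow_mul {m : ℕ} {h : MvPolynomial ι R}
    (hh : h ∈ harmonicSubmodule ι R m) (j : ℕ) :
    polyLaplacian ι R (psum ι R 2 ^ (j + 1) * h) =
      (2 * (j + 1) * (2 * (j + m) + Fintype.card ι)) • (psum ι R 2 ^ j * h) := by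
  obtain ⟨hhom : h.IsHomogeneous m, hlap : polyLaplacian ι R h = 0⟩ := hh
  induction j with
  | zero =>
    rw [zero_add, pow_one, polyLaplacian_psum_two_mul hhom, hlap]
    simp only [nsmul_eq_mul]
    push_cast
    ring
  | succ j ih =>
    have hdeg : (psum ι R 2 ^ (j + 1) * h).IsHomogeneous (2 * (j + 1) + m) :=
      ((isHomogeneous_psum 2).pow _).mul hhom
    rw [pow_succ' _ (j + 1), mul_assoc, polyLaplacian_psum_two_mul hdeg, ih]
    simp only [nsmul_eq_mul]
    push_cast
    ring

/-- The span of the products `|x|^{2j} h`, with `h` harmonic and homogeneous of degree `m` and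
`2j + m = n`; the Gauss decomposition says that these are all homogeneous polynomials of
degree `n`. -/
def gaussSubmodule (ι R : Type*) [Fintype ι] [CommSemiring R] (n : ℕ) :
    Submodule R (MvPolynomial ι R) :=
  Submodule.span R
    {P | ∃ j m, ∃ h ∈ harmonicSubmodule ι R m, 2 * j + m = n ∧ P = psum ι R 2 ^ j * h}

theorem gaussSubmodule_le_homogeneousSubmodule (n : ℕ) :
    gaussSubmodule ι R n ≤ homogeneousSubmodule ι R n := by
  refine Submodule.span_le.2 ?_
  rintro _ ⟨j, m, h, ⟨hhom, -⟩, rfl, rfl⟩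
  exact ((isHomogeneous_psum 2).pow _).mul hhom

theorem harmonicSubmodule_le_gaussSubmodule (n : ℕ) :
    harmonicSubmodule ι R n ≤ gaussSubmodule ι R n :=
  fun h hh => Submodule.subset_span ⟨0, n, h, hh, by simp, by simp⟩

end Laplacian

section GaussDecomposition

variable {ι K : Type*} [Fintype ι] [Nonempty ι] [Field K] [CharZero K]

theorem gaussSubmodule_le_map_polyLaplacian (n : ℕ) :
    gaussSubmodule ι K n ≤ (gaussSubmodule ι K (n + 2)).map (polyLaplacian ι K) := by
  refine Submodule.span_le.2 ?_
  rintro _ ⟨j, m, h, hh, rfl, rfl⟩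
  set c : ℕ := 2 * (j + 1) * (2 * (j + m) + Fintype.card ι) with hc
  have hc0 : (c : K) ≠ 0 := by
    have := Fintype.card_pos (α := ι)
    exact_mod_cast (by positivity : c ≠ 0)
  refine ⟨(c : K)⁻¹ • (psum ι K 2 ^ (j + 1) * h),
    Submodule.smul_mem _ _ (Submodule.subset_span ⟨j + 1, m, h, hh, by ring, rfl⟩), ?_⟩
  rw [map_smul, polyLaplacian_psum_two_pow_mul hh, ← hc, ← Nat.cast_smul_eq_nsmul K, smul_smul,
    inv_mul_cancel₀ hc0, one_smul]

theorem gaussSubmodule_eq_homogeneousSubmodule (n : ℕ) :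
    gaussSubmodule ι K n = homogeneousSubmodule ι K n := by
  refine (gaussSubmodule_le_homogeneousSubmodule n).antisymm ?_
  induction n using Nat.strong_induction_on with
  | _ n ih =>
    intro P hP
    obtain hn | ⟨n, rfl⟩ : n < 2 ∨ ∃ m, n = m + 2 := by
      obtain hn | hn := lt_or_ge n 2
      · exact .inl hn
      · exact .inr (Nat.exists_eq_add_of_le' hn)
    · exact harmonicSubmodule_le_gaussSubmodule n ⟨hP, polyLaplacian_eq_zero_of_lt_two hn hP⟩
    · obtain ⟨Q, hQ, hQP⟩ := gaussSubmodule_le_map_polyLaplacian n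
        (ih n (by lia) (isHomogeneous_polyLaplacian hP))
      have hharm : P - Q ∈ harmonicSubmodule ι K (n + 2) :=
        ⟨sub_mem hP (gaussSubmodule_le_homogeneousSubmodule _ hQ),
          LinearMap.sub_mem_ker_iff.2 hQP.symm⟩
      simpa using add_mem (harmonicSubmodule_le_gaussSubmodule _ hharm) hQ

end GaussDecomposition

namespace HarmonicBasis

variable {d : ℕ} (B : HarmonicBasis d)

theorem harmonicSubmodule_le_span (k : ℕ) :
    harmonicSubmodule (Fin d) ℝ k ≤ Submodule.span ℝ (Set.range (B.Y k)) :=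
  fun P ⟨hhom, hlap⟩ => B.complete k P (polyLaplacian_apply P ▸ hlap) hhom

/-- The products `|x|^{2j} Y_{k,l}`, indexed by `((k, l), j)`: a spanning family of `ℂ[x₁,…,x_d]`
by the Gauss decomposition. -/
def gaussFamily (i : (Σ k, Fin (B.a k)) × ℕ) : MvPolynomial (Fin d) ℂ :=
  normSqP d ^ i.2 * B.YC i.1.1 i.1.2

theorem map_gaussSubmodule_le_span_gaussFamily (n : ℕ) :
    (gaussSubmodule (Fin d) ℝ n).map (mapAlgHom (Algebra.ofId ℝ ℂ)).toLinearMap ≤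
      (Submodule.span ℂ (Set.range B.gaussFamily)).restrictScalars ℝ := by
  rw [Submodule.map_le_iff_le_comap]
  refine Submodule.span_le.2 ?_
  rintro _ ⟨j, m, h, hh, -, rfl⟩
  suffices Submodule.span ℝ (Set.range (B.Y m)) ≤
      ((Submodule.span ℂ (Set.range B.gaussFamily)).restrictScalars ℝ).comap
        ((mapAlgHom (Algebra.ofId ℝ ℂ)).toLinearMap ∘ₗ
          LinearMap.mulLeft ℝ (psum (Fin d) ℝ 2 ^ j)) from
    this (B.harmonicSubmodule_le_span m hh)
  refine Submodule.span_le.2 ?_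
  rintro _ ⟨l, rfl⟩
  refine Submodule.subset_span ⟨(⟨m, l⟩, j), ?_⟩
  simp [gaussFamily, normSqP, psum, YC, Algebra.ofId]

theorem span_gaussFamily_eq_top [NeZero d] :
    Submodule.span ℂ (Set.range B.gaussFamily) = ⊤ := by
  rw [eq_top_iff, ← (basisMonomials (Fin d) ℂ).span_eq, Submodule.span_le]
  rintro _ ⟨s, rfl⟩
  have hmem : monomial s (1 : ℝ) ∈ gaussSubmodule (Fin d) ℝ s.degree := by
    rw [gaussSubmodule_eq_homogeneousSubmodule]
    exact isHomogeneous_monomial 1 rfl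
  simpa using B.map_gaussSubmodule_le_span_gaussFamily _ (Submodule.mem_map_of_mem hmem)

theorem gaussDecomp_single (k : ℕ) (l : Fin (B.a k)) (p : Polynomial ℂ) :
    B.GaussDecomp (Polynomial.aeval (normSqP d) p * B.YC k l) k
      (Pi.single k (Pi.single l p)) := by
  refine ⟨fun k' hk' l' => by simp [hk'.ne'], ?_⟩
  rw [Finset.sum_eq_single_of_mem k (by simp) (fun k' _ hk' => by simp [hk']),
    Fintype.sum_eq_single l (fun l' hl' => by simp [hl'])]
  simp

end HarmonicBasis

section SignedIntegral

variable {α G : Type*} [MeasurableSpace α] [NormedAddCommGroup G]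

theorem measure_sub_add_eq_sub_add_swap (M N : Measure α) [IsFiniteMeasure M]
    [IsFiniteMeasure N] : (M - N) + N = (N - M) + M := by
  have hsub := Measure.sub_toSignedMeasure_eq_toSignedMeasure_sub (μ := M) (ν := N)
  rw [sub_eq_sub_iff_add_eq_add] at hsub
  rw [← Measure.toSignedMeasure_eq_toSignedMeasure_iff, Measure.toSignedMeasure_add,
    Measure.toSignedMeasure_add, ← hsub, add_comm]

theorem integrable_totalVariation_iff {μ : SignedMeasure α} {F : α → G} :
    Integrable F μ.totalVariation ↔ Integrable F μ.toJordanDecomposition.posPart ∧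
      Integrable F μ.toJordanDecomposition.negPart :=
  integrable_add_measure

theorem integrable_totalVariation_toSignedMeasure_sub {M N : Measure α} [IsFiniteMeasure M]
    [IsFiniteMeasure N] {F : α → G} (hM : Integrable F M) (hN : Integrable F N) :
    Integrable F (M.toSignedMeasure - N.toSignedMeasure).totalVariation := by
  rw [integrable_totalVariation_iff, Measure.toJordanDecomposition_toSignedMeasure_sub]
  exact ⟨hM.mono_measure Measure.sub_le, hN.mono_measure Measure.sub_le⟩

variable [NormedSpace ℝ G]

theorem sInt_toSignedMeasure_sub {M N : Measure α} [IsFiniteMeasure M] [IsFiniteMeasure N]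
    {F : α → G} (hM : Integrable F M) (hN : Integrable F N) :
    sInt (M.toSignedMeasure - N.toSignedMeasure) F = ∫ x, F x ∂M - ∫ x, F x ∂N := by
  rw [sInt, Measure.toJordanDecomposition_toSignedMeasure_sub,
    Measure.jordanDecompositionOfToSignedMeasureSub_posPart,
    Measure.jordanDecompositionOfToSignedMeasureSub_negPart, sub_eq_sub_iff_add_eq_add,
    ← integral_add_measure (hM.mono_measure Measure.sub_le) hN,
    ← integral_add_measure hM (hN.mono_measure Measure.sub_le),
    measure_sub_add_eq_sub_add_swap, add_comm M]

theorem sInt_add {μ : SignedMeasure α} {F F' : α → G} (hF : Integrable F μ.totalVariation)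
    (hF' : Integrable F' μ.totalVariation) : sInt μ (F + F') = sInt μ F + sInt μ F' := by
  rw [integrable_totalVariation_iff] at hF hF'
  simp only [sInt, integral_add' hF.1 hF'.1, integral_add' hF.2 hF'.2]
  abel

theorem sInt_const_smul {𝕜 : Type*} [NormedDivisionRing 𝕜] [Module 𝕜 G] [NormSMulClass 𝕜 G]
    [SMulCommClass ℝ 𝕜 G] (μ : SignedMeasure α) (c : 𝕜) (F : α → G) :
    sInt μ (c • F) = c • sInt μ F := by
  simp only [sInt, Pi.smul_apply, integral_smul, smul_sub]

theorem sInt_ofReal (μ : SignedMeasure α) (f : α → ℝ) :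
    sInt μ (fun x => (f x : ℂ)) = ((sInt μ f : ℝ) : ℂ) := by
  simp only [sInt, integral_complex_ofReal, Complex.ofReal_sub]

end SignedIntegral

section PositiveImage

variable {ι Z α G : Type*} [MeasurableSpace Z] [MeasurableSpace α] {ν : ι → Measure Z}
  {D : ι → Z → ℝ} {π : Z → α}

/-- The sum over `i` of the images under `π` of the measures with density `max (D i) 0` with
respect to `ν i`, the positive part being taken by `ENNReal.ofReal`. Subtracting the measure for
`-D` gives the sum of the images of the signed measures `D i • ν i`. -/
def positiveImage (ν : ι → Measure Z) (D : ι → Z → ℝ) (π : Z → α) : Measure α :=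
  Measure.sum fun i => ((ν i).withDensity fun z => ENNReal.ofReal (D i z)).map π

theorem positiveImage_mono {D' : ι → Z → ℝ} (hD : D ≤ D') (hπ : Measurable π) :
    positiveImage ν D π ≤ positiveImage ν D' π :=
  Measure.le_intro fun s hs _ => by
    simp only [positiveImage, Measure.sum_apply _ hs]
    refine ENNReal.tsum_le_tsum fun i => ?_
    exact Measure.map_mono (withDensity_mono (.of_forall fun z =>
      ENNReal.ofReal_le_ofReal (hD i z))) hπ s

theorem lintegral_positiveImage (hD : ∀ i, Measurable (D i)) (hπ : Measurable π)
    {f : α → ℝ≥0∞} (hf : Measurable f) :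
    ∫⁻ x, f x ∂positiveImage ν D π =
      ∑' i, ∫⁻ z, ENNReal.ofReal (D i z) * f (π z) ∂ν i := by
  rw [positiveImage, lintegral_sum_measure]
  refine tsum_congr fun i => ?_
  rw [lintegral_map hf hπ]
  exact lintegral_withDensity_eq_lintegral_mul _ (hD i).ennreal_ofReal (hf.comp hπ)

variable [NormedAddCommGroup G] [NormedSpace ℝ G]

theorem integrable_and_hasSum_integral_positiveImage (hD : ∀ i, Measurable (D i))
    (hπ : Measurable π) {F : α → G} (hF : Integrable F (positiveImage ν D π)) :
    (∀ i, Integrable (fun z => max (D i z) 0 • F (π z)) (ν i)) ∧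
    HasSum (fun i => ∫ z, max (D i z) 0 • F (π z) ∂ν i) (∫ x, F x ∂positiveImage ν D π) := by
  have hlt (i : ι) : ∀ᵐ z ∂ν i, ENNReal.ofReal (D i z) < ⊤ :=
    .of_forall fun z => ENNReal.ofReal_lt_top
  have hpiece (i : ι) := hF.mono_measure (Measure.le_sum _ i)
  refine ⟨fun i => ?_, (hasSum_integral_measure hF).congr_fun fun i => ?_⟩
  · have h := (hpiece i).comp_measurable hπ
    rw [integrable_withDensity_iff_integrable_smul' (hD i).ennreal_ofReal (hlt i)] at h
    simpa only [ENNReal.toReal_ofReal', Function.comp_apply] using h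
  · rw [integral_map hπ.aemeasurable (hpiece i).1,
      integral_withDensity_eq_integral_toReal_smul (hD i).ennreal_ofReal (hlt i)]
    simp only [ENNReal.toReal_ofReal']

theorem integral_positiveImage_sub_neg (hD : ∀ i, Measurable (D i)) (hπ : Measurable π)
    {F : α → G} (hpos : Integrable F (positiveImage ν D π))
    (hneg : Integrable F (positiveImage ν (-D) π)) :
    ∫ x, F x ∂positiveImage ν D π - ∫ x, F x ∂positiveImage ν (-D) π =
      ∑' i, ∫ z, D i z • F (π z) ∂ν i := by
  have hD' (i : ι) : Measurable ((-D) i) := (hD i).neg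
  obtain ⟨hint, hsum⟩ := integrable_and_hasSum_integral_positiveImage hD hπ hpos
  obtain ⟨hint', hsum'⟩ := integrable_and_hasSum_integral_positiveImage hD' hπ hneg
  rw [← (hsum.sub hsum').tsum_eq]
  refine tsum_congr fun i => ?_
  rw [← integral_sub (hint i) (hint' i)]
  simp only [← sub_smul, Pi.neg_apply, max_zero_sub_eq_self]

theorem integrable_smul_comp_of_positiveImage_abs (hD : ∀ i, Measurable (D i))
    (hπ : Measurable π) {F : α → G} (hF : Integrable F (positiveImage ν |D| π)) (i : ι) :
    Integrable (fun z => D i z • F (π z)) (ν i) := by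
  have hD' (i : ι) : Measurable ((-D) i) := (hD i).neg
  have hpos := (integrable_and_hasSum_integral_positiveImage hD hπ
    (hF.mono_measure (positiveImage_mono (le_abs_self D) hπ))).1 i
  have hneg := (integrable_and_hasSum_integral_positiveImage hD' hπ
    (hF.mono_measure (positiveImage_mono (neg_le_abs D) hπ))).1 i
  refine (hpos.sub hneg).congr (.of_forall fun z => ?_)
  simp only [Pi.sub_apply, Pi.neg_apply, ← sub_smul, max_zero_sub_eq_self]

theorem exists_signedMeasure_sInt_eq_tsum (hD : ∀ i, Measurable (D i)) (hπ : Measurable π)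
    [IsFiniteMeasure (positiveImage ν |D| π)] :
    ∃ μ : SignedMeasure α, ∀ {V : Type*} [NormedAddCommGroup V] [NormedSpace ℝ V] (F : α → V),
      Integrable F (positiveImage ν |D| π) →
      Integrable F μ.totalVariation ∧ sInt μ F = ∑' i, ∫ z, D i z • F (π z) ∂ν i := by
  have hle : positiveImage ν D π ≤ positiveImage ν |D| π := positiveImage_mono (le_abs_self D) hπ
  have hle' : positiveImage ν (-D) π ≤ positiveImage ν |D| π :=
    positiveImage_mono (neg_le_abs D) hπ
  have := isFiniteMeasure_of_le _ hle
  have := isFiniteMeasure_of_le _ hle'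
  refine ⟨(positiveImage ν D π).toSignedMeasure - (positiveImage ν (-D) π).toSignedMeasure,
    fun {_} _ _ F hF => ?_⟩
  have hpos := hF.mono_measure hle
  have hneg := hF.mono_measure hle'
  exact ⟨integrable_totalVariation_toSignedMeasure_sub hpos hneg, by
    rw [sInt_toSignedMeasure_sub hpos hneg, integral_positiveImage_sub_neg hD hπ hpos hneg]⟩

end PositiveImage

theorem eval_smul_of_isHomogeneous {ι R : Type*} [CommSemiring R] {P : MvPolynomial ι R} {n : ℕ}
    (hP : P.IsHomogeneous n) (r : R) (x : ι → R) : eval (r • x) P = r ^ n * eval x P := by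
  simp only [eval_eq, Finset.mul_sum]
  refine Finset.sum_congr rfl fun s hs => ?_
  have hdeg : ∑ i ∈ s.support, s i = n := (hP.degree_eq_sum_deg_support hs).symm
  simp only [Pi.smul_apply, smul_eq_mul, mul_pow, Finset.prod_mul_distrib,
    Finset.prod_pow_eq_pow_sum, hdeg]
  ring

section EvalC

variable {d : ℕ}

theorem evalC_aeval_normSqP (p : Polynomial ℂ) (x : E d) :
    evalC (Polynomial.aeval (normSqP d) p) x = p.eval ((‖x‖ : ℂ) ^ 2) := by
  have hnorm : aeval (fun i => (x i : ℂ)) (normSqP d) = (‖x‖ : ℂ) ^ 2 := by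
    rw [← Complex.ofReal_pow, EuclideanSpace.norm_sq_eq]
    simp [normSqP]
  rw [evalC, ← coe_aeval_eq_eval, RingHom.coe_coe, ← Polynomial.aeval_algHom_apply, hnorm,
    Polynomial.coe_aeval_eq_eval]

theorem norm_prod_coord_pow_le (x : E d) (s : Fin d → ℕ) :
    ‖∏ i, (x i : ℂ) ^ s i‖ ≤ ‖x‖ ^ ∑ i, s i := by
  rw [norm_prod, ← Finset.prod_pow_eq_pow_sum]
  refine Finset.prod_le_prod (fun i _ => norm_nonneg _) fun i _ => ?_
  rw [norm_pow, Complex.norm_real]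
  gcongr
  exact PiLp.norm_apply_le x i

theorem integrable_evalC {ρ : Measure (E d)} (hρ : ∀ n : ℕ, Integrable (fun x => ‖x‖ ^ n) ρ)
    (P : MvPolynomial (Fin d) ℂ) : Integrable (evalC P) ρ := by
  have heval : evalC P = fun x : E d => ∑ s ∈ P.support, P.coeff s * ∏ i, (x i : ℂ) ^ s i :=
    funext fun x => eval_eq' _ _
  rw [heval]
  refine integrable_finsetSum _ fun s _ => Integrable.const_mul ?_ _
  exact (hρ (∑ i, s i)).mono' (by fun_prop) (.of_forall fun x => norm_prod_coord_pow_le x s)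

end EvalC

/-- The linear functional `P ↦ ∫ P dμ` on polynomials defined by a signed moment measure. -/
def momentFunctional {d : ℕ} (μ : SignedMeasure (E d)) (hμ : IsMomentMeasure μ) :
    MvPolynomial (Fin d) ℂ →ₗ[ℂ] ℂ where
  toFun P := sInt μ (evalC P)
  map_add' P Q := by
    rw [← sInt_add (hμ P) (hμ Q)]
    congr 1
    ext x
    simp [evalC]
  map_smul' c P := by
    rw [RingHom.id_apply, ← sInt_const_smul]
    congr 1
    ext x
    simp [evalC]

instance isFiniteMeasure_sphMeas (d : ℕ) : IsFiniteMeasure (sphMeas d) := by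
  unfold sphMeas
  infer_instance

namespace HarmonicBasis

variable {d : ℕ} (B : HarmonicBasis d)

theorem evalC_YC (k : ℕ) (l : Fin (B.a k)) (x : E d) :
    evalC (B.YC k l) x = (B.Yf k l x : ℂ) := by
  rw [evalC, YC, eval_map]
  exact (eval₂_comp_left (algebraMap ℝ ℂ) (RingHom.id ℝ) _ _).symm

theorem evalC_aeval_normSqP_mul_YC (k : ℕ) (l : Fin (B.a k)) (p : Polynomial ℂ) (x : E d) :
    evalC (Polynomial.aeval (normSqP d) p * B.YC k l) x =
      p.eval ((‖x‖ : ℂ) ^ 2) * (B.Yf k l x : ℂ) := by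
  rw [← evalC_aeval_normSqP, ← evalC_YC]
  exact map_mul (eval _) _ _

theorem continuous_Yf (k : ℕ) (l : Fin (B.a k)) : Continuous (B.Yf k l) :=
  (MvPolynomial.continuous_eval (B.Y k l)).comp (by fun_prop)

theorem measurable_Yf_sphere (k : ℕ) (l : Fin (B.a k)) :
    Measurable fun θ : sphere (0 : E d) 1 => B.Yf k l θ :=
  (B.continuous_Yf k l).measurable.comp measurable_subtype_coe

theorem Yf_smul (k : ℕ) (l : Fin (B.a k)) (r : ℝ) (x : E d) :
    B.Yf k l (r • x) = r ^ k * B.Yf k l x :=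
  eval_smul_of_isHomogeneous (B.homogeneous k l) r x

theorem integrable_Yf_mul_Yf (k k' : ℕ) (l : Fin (B.a k)) (l' : Fin (B.a k')) :
    Integrable (fun θ : sphere (0 : E d) 1 => B.Yf k l θ * B.Yf k' l' θ) (sphMeas d) :=
  (((B.continuous_Yf k l).comp continuous_subtype_val).mul
    ((B.continuous_Yf k' l').comp continuous_subtype_val)).integrable_of_hasCompactSupport
      (.of_compactSpace _)

theorem lintegral_abs_Yf_le (k : ℕ) (l : Fin (B.a k)) :
    ∫⁻ θ : sphere (0 : E d) 1, ENNReal.ofReal |B.Yf k l θ| ∂sphMeas d ≤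
      sphMeas d Set.univ + 1 := by
  have hsq : ∫⁻ θ : sphere (0 : E d) 1, ENNReal.ofReal (B.Yf k l θ * B.Yf k l θ) ∂sphMeas d
      = 1 := by
    rw [← ofReal_integral_eq_lintegral_ofReal (B.integrable_Yf_mul_Yf k k l l)
      (.of_forall fun θ => mul_self_nonneg _)]
    simpa [Yf] using B.orthonormal k k l l
  have hle (y : ℝ) : |y| ≤ 1 + y * y := by
    nlinarith [abs_mul_abs_self y, sq_nonneg (|y| - 1), abs_nonneg y]
  calc ∫⁻ θ : sphere (0 : E d) 1, ENNReal.ofReal |B.Yf k l θ| ∂sphMeas d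
      ≤ ∫⁻ θ : sphere (0 : E d) 1, (1 + ENNReal.ofReal (B.Yf k l θ * B.Yf k l θ)) ∂sphMeas d := by
        refine lintegral_mono fun θ => ?_
        rw [← ENNReal.ofReal_one, ← ENNReal.ofReal_add zero_le_one (mul_self_nonneg _)]
        exact ENNReal.ofReal_le_ofReal (hle _)
    _ = sphMeas d Set.univ + 1 := by
        rw [lintegral_add_left measurable_const, hsq, lintegral_one]

theorem lfCoeff_radial_mul (k : ℕ) (l : Fin (B.a k)) (g : ℝ → ℂ) (k' : ℕ) (l' : Fin (B.a k'))
    (r : ℝ) :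
    B.lfCoeff (fun x => g ‖x‖ * (B.Yf k l x : ℂ)) k' l' r =
      if k = k' ∧ (l : ℕ) = l' then (r : ℂ) ^ k * g |r| else 0 := by
  have hsep (θ : sphere (0 : E d) 1) :
      g ‖r • (θ : E d)‖ * (B.Yf k l (r • (θ : E d)) : ℂ) * (B.Yf k' l' θ : ℂ) =
        (r : ℂ) ^ k * g |r| * ((B.Yf k l θ * B.Yf k' l' θ : ℝ) : ℂ) := by
    rw [Yf_smul, norm_smul, norm_eq_of_mem_sphere, mul_one, Real.norm_eq_abs]
    push_cast
    ring
  have horth : ∫ θ : sphere (0 : E d) 1, B.Yf k l θ * B.Yf k' l' θ ∂sphMeas d =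
      if k = k' ∧ (l : ℕ) = l' then 1 else 0 := B.orthonormal k k' l l'
  simp only [lfCoeff, hsep, integral_const_mul, integral_complex_ofReal, horth]
  split_ifs <;> simp

section Synthesis

variable (σ : (k : ℕ) → Fin (B.a k) → Measure ℝ)

/-- The radial factor `r^{-k} dσ_{k,l}(r)` of the representing signed measure.
For `k > 0` its density is `∞` at `r ≤ 0`. -/
def radialMeasure (i : Σ k, Fin (B.a k)) : Measure ℝ :=
  (σ i.1 i.2).withDensity fun r => (ENNReal.ofReal r ^ i.1)⁻¹

/-- The sum over `k, l` of the images in `ℝ^d` of `r^{-k} |Y_{k,l}(θ)| dσ_{k,l}(r) dθ` under polar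
coordinates. It dominates the total variation of the representing signed measure. -/
def dominatingMeasure : Measure (E d) :=
  positiveImage (fun i => (B.radialMeasure σ i).prod (sphMeas d))
    |fun i (z : ℝ × sphere (0 : E d) 1) => B.Yf i.1 i.2 z.2| (fun z => z.1 • (z.2 : E d))

variable {B σ}

theorem tsum_lintegral_radialMeasure_lt_top (hsum : B.SummCond σ) (N : ℕ) :
    ∑' i, ∫⁻ r, ENNReal.ofReal r ^ N ∂B.radialMeasure σ i < ⊤ := by
  refine lt_of_eq_of_lt ?_ (hsum N)
  rw [ENNReal.tsum_sigma']
  refine tsum_congr fun k => ?_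
  rw [tsum_fintype]
  refine Finset.sum_congr rfl fun l _ => ?_
  rw [radialMeasure, lintegral_withDensity_eq_lintegral_mul _ (by fun_prop) (by fun_prop)]
  exact lintegral_congr fun r => mul_comm _ _

theorem isFiniteMeasure_radialMeasure (hsum : B.SummCond σ) (i : Σ k, Fin (B.a k)) :
    IsFiniteMeasure (B.radialMeasure σ i) :=
  ⟨by simpa using (ENNReal.le_tsum i).trans_lt (tsum_lintegral_radialMeasure_lt_top hsum 0)⟩

theorem integral_radialMeasure_pow_mul {k : ℕ} {l : Fin (B.a k)}
    (hpos : σ k l (Set.Iio 0) = 0) [IsFiniteMeasure (B.radialMeasure σ ⟨k, l⟩)] (g : ℝ → ℂ) :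
    ∫ r, (r : ℂ) ^ k * g |r| ∂B.radialMeasure σ ⟨k, l⟩ = ∫ r, g r ∂σ k l := by
  have hmeas : Measurable fun r : ℝ => (ENNReal.ofReal r ^ k)⁻¹ := by fun_prop
  have hfin : ∀ᵐ r ∂σ k l, (ENNReal.ofReal r ^ k)⁻¹ < ⊤ := by
    refine ae_lt_top hmeas ?_
    simpa [radialMeasure] using measure_ne_top (B.radialMeasure σ ⟨k, l⟩) Set.univ
  rw [radialMeasure, integral_withDensity_eq_integral_toReal_smul hmeas hfin]
  refine integral_congr_ae ?_
  filter_upwards [measure_eq_zero_iff_ae_notMem.1 hpos, hfin] with r hr hr'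
  rw [Set.mem_Iio, not_lt] at hr
  have hrk : (r : ℂ) ^ k ≠ 0 := by
    rw [ENNReal.inv_lt_top, ← ENNReal.ofReal_pow hr, ENNReal.ofReal_pos] at hr'
    exact_mod_cast hr'.ne'
  rw [abs_of_nonneg hr, ENNReal.toReal_inv, ENNReal.toReal_pow, ENNReal.toReal_ofReal hr,
    Complex.real_smul, Complex.ofReal_inv, Complex.ofReal_pow, inv_mul_cancel_left₀ hrk]

theorem lintegral_abs_Yf_mul_norm_pow_le (hpos : ∀ k l, σ k l (Set.Iio 0) = 0)
    (hsum : B.SummCond σ) (n : ℕ) (i : Σ k, Fin (B.a k)) :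
    ∫⁻ z : ℝ × sphere (0 : E d) 1, ENNReal.ofReal |B.Yf i.1 i.2 z.2| *
      ENNReal.ofReal (‖z.1 • (z.2 : E d)‖ ^ n) ∂(B.radialMeasure σ i).prod (sphMeas d) ≤
    (∫⁻ r, ENNReal.ofReal r ^ n ∂B.radialMeasure σ i) * (sphMeas d Set.univ + 1) := by
  have := isFiniteMeasure_radialMeasure hsum i
  have hnonneg : ∀ᵐ r ∂B.radialMeasure σ i, r ∉ Set.Iio 0 :=
    (withDensity_absolutelyContinuous _ _).ae_le (measure_eq_zero_iff_ae_notMem.1 (hpos _ _))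
  have hY : Measurable fun θ : sphere (0 : E d) 1 => ENNReal.ofReal |B.Yf i.1 i.2 θ| :=
    (B.measurable_Yf_sphere i.1 i.2).abs.ennreal_ofReal
  simp only [norm_smul, norm_eq_of_mem_sphere, mul_one, Real.norm_eq_abs,
    mul_comm (ENNReal.ofReal |B.Yf _ _ _|)]
  rw [lintegral_prod_mul (f := fun r : ℝ => ENNReal.ofReal (|r| ^ n)) (by fun_prop)
    hY.aemeasurable]
  refine mul_le_mul' (lintegral_congr_ae ?_).le (B.lintegral_abs_Yf_le i.1 i.2)
  filter_upwards [hnonneg] with r hr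
  rw [abs_of_nonneg (not_lt.1 hr), ENNReal.ofReal_pow (not_lt.1 hr)]

theorem lintegral_dominatingMeasure_lt_top (hpos : ∀ k l, σ k l (Set.Iio 0) = 0)
    (hsum : B.SummCond σ) (n : ℕ) :
    ∫⁻ x, ENNReal.ofReal (‖x‖ ^ n) ∂B.dominatingMeasure σ < ⊤ := by
  have hY (i : Σ k, Fin (B.a k)) :
      Measurable (|fun i (z : ℝ × sphere (0 : E d) 1) => B.Yf i.1 i.2 z.2| i) :=
    ((B.measurable_Yf_sphere i.1 i.2).comp measurable_snd).abs
  rw [dominatingMeasure, lintegral_positiveImage hY (by fun_prop) (by fun_prop)]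
  refine (ENNReal.tsum_le_tsum (lintegral_abs_Yf_mul_norm_pow_le hpos hsum n)).trans_lt ?_
  rw [ENNReal.tsum_mul_right]
  exact ENNReal.mul_lt_top (tsum_lintegral_radialMeasure_lt_top hsum n)
    (ENNReal.add_lt_top.2 ⟨measure_lt_top _ _, ENNReal.one_lt_top⟩)

theorem isFiniteMeasure_dominatingMeasure (hpos : ∀ k l, σ k l (Set.Iio 0) = 0)
    (hsum : B.SummCond σ) : IsFiniteMeasure (B.dominatingMeasure σ) :=
  ⟨by simpa using lintegral_dominatingMeasure_lt_top hpos hsum 0⟩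

theorem integrable_norm_pow_dominatingMeasure (hpos : ∀ k l, σ k l (Set.Iio 0) = 0)
    (hsum : B.SummCond σ) (n : ℕ) :
    Integrable (fun x => ‖x‖ ^ n) (B.dominatingMeasure σ) :=
  ⟨by fun_prop, (hasFiniteIntegral_iff_ofReal (.of_forall fun x => by positivity)).2
    (lintegral_dominatingMeasure_lt_top hpos hsum n)⟩

theorem exists_signedMeasure_sInt_eq_tsum_lfCoeff (hpos : ∀ k l, σ k l (Set.Iio 0) = 0)
    (hsum : B.SummCond σ) :
    ∃ μ : SignedMeasure (E d), ∀ F : E d → ℂ, Integrable F (B.dominatingMeasure σ) →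
      Integrable F μ.totalVariation ∧
      sInt μ F = ∑' i : Σ k, Fin (B.a k), ∫ r, B.lfCoeff F i.1 i.2 r ∂B.radialMeasure σ i := by
  have := isFiniteMeasure_dominatingMeasure hpos hsum
  rw [dominatingMeasure] at this
  have hD (i : Σ k, Fin (B.a k)) :
      Measurable fun z : ℝ × sphere (0 : E d) 1 => B.Yf i.1 i.2 z.2 :=
    (B.measurable_Yf_sphere i.1 i.2).comp measurable_snd
  have hπ : Measurable fun z : ℝ × sphere (0 : E d) 1 => z.1 • (z.2 : E d) := by fun_prop
  obtain ⟨μ, hμ⟩ := exists_signedMeasure_sInt_eq_tsum hD hπ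
    (ν := fun i => (B.radialMeasure σ i).prod (sphMeas d))
  refine ⟨μ, fun F hF => ⟨(hμ F hF).1, (hμ F hF).2.trans (tsum_congr fun i => ?_)⟩⟩
  have := isFiniteMeasure_radialMeasure hsum i
  rw [integral_prod _ (integrable_smul_comp_of_positiveImage_abs hD hπ hF i)]
  simp only [lfCoeff, Complex.real_smul, mul_comm (Complex.ofReal _)]

theorem tsum_integral_lfCoeff_radial_mul (hpos : ∀ k l, σ k l (Set.Iio 0) = 0)
    (hsum : B.SummCond σ) (k : ℕ) (l : Fin (B.a k)) (g : ℝ → ℂ) :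
    ∑' i : Σ k, Fin (B.a k), ∫ r, B.lfCoeff (fun x => g ‖x‖ * (B.Yf k l x : ℂ)) i.1 i.2 r
      ∂B.radialMeasure σ i = ∫ r, g r ∂σ k l := by
  have := isFiniteMeasure_radialMeasure hsum
  rw [tsum_eq_single ⟨k, l⟩]
  · simpa [lfCoeff_radial_mul] using integral_radialMeasure_pow_mul (hpos k l) g
  · rintro ⟨k', l'⟩ hne
    have hkl : ¬(k = k' ∧ (l : ℕ) = l') := by
      rintro ⟨rfl, hl⟩
      exact hne (by rw [Fin.ext hl])
    simp [lfCoeff_radial_mul, hkl]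

theorem exists_signedMeasure_sInt_radial_mul (hpos : ∀ k l, σ k l (Set.Iio 0) = 0)
    (hsum : B.SummCond σ) :
    ∃ μ : SignedMeasure (E d), IsMomentMeasure μ ∧ ∀ (k : ℕ) (l : Fin (B.a k)) (g : ℝ → ℂ),
      Integrable (fun x => g ‖x‖ * (B.Yf k l x : ℂ)) (B.dominatingMeasure σ) →
      sInt μ (fun x => g ‖x‖ * (B.Yf k l x : ℂ)) = ∫ r, g r ∂σ k l := by
  obtain ⟨μ, hμ⟩ := exists_signedMeasure_sInt_eq_tsum_lfCoeff hpos hsum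
  refine ⟨μ, fun P => (hμ _ ?_).1, fun k l g hg => ?_⟩
  · exact integrable_evalC (integrable_norm_pow_dominatingMeasure hpos hsum) P
  · rw [(hμ _ hg).2, tsum_integral_lfCoeff_radial_mul hpos hsum]

theorem integrable_compactSupport_mul_Yf (hpos : ∀ k l, σ k l (Set.Iio 0) = 0)
    (hsum : B.SummCond σ) {h : ℝ → ℝ} (hc : Continuous h) (hs : HasCompactSupport h)
    (k : ℕ) (l : Fin (B.a k)) :
    Integrable (fun x => (h ‖x‖ : ℂ) * (B.Yf k l x : ℂ)) (B.dominatingMeasure σ) := by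
  obtain ⟨C, hC⟩ := hs.exists_bound_of_continuous hc
  have hY := integrable_evalC (integrable_norm_pow_dominatingMeasure hpos hsum) (B.YC k l)
  simp only [← evalC_YC]
  exact hY.bdd_mul (c := C) (by fun_prop)
    (.of_forall fun x => (Complex.norm_real _).trans_le (hC ‖x‖))

theorem IsComponentFamily.pseudoPositive {μ : SignedMeasure (E d)}
    (hμ : B.IsComponentFamily μ σ) : B.PseudoPositive μ :=
  fun k l h hc hs hnonneg => (hμ k l).2 h hc hs ▸ integral_nonneg hnonneg

theorem exists_isMomentMeasure_isComponentFamily (hpos : ∀ k l, σ k l (Set.Iio 0) = 0)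
    (hsum : B.SummCond σ) :
    ∃ (μ : SignedMeasure (E d)) (hμ : IsMomentMeasure μ), B.IsComponentFamily μ σ ∧
      ∀ (k : ℕ) (l : Fin (B.a k)) (p : Polynomial ℂ),
        B.component (momentFunctional μ hμ) k l p = ∫ r, p.eval ((r : ℂ) ^ 2) ∂σ k l := by
  obtain ⟨μ, hmom, hrad⟩ := exists_signedMeasure_sInt_radial_mul hpos hsum
  refine ⟨μ, hmom, fun k l => ⟨hpos k l, fun h hc hs => ?_⟩, fun k l p => ?_⟩
  · have hh := hrad k l (fun r => h r) (integrable_compactSupport_mul_Yf hpos hsum hc hs k l)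
    rw [integral_complex_ofReal] at hh
    simp only [← Complex.ofReal_mul, sInt_ofReal] at hh
    exact (Complex.ofReal_injective hh).symm
  · have heval := funext (B.evalC_aeval_normSqP_mul_YC k l p)
    have hint := integrable_evalC (integrable_norm_pow_dominatingMeasure hpos hsum)
      (Polynomial.aeval (normSqP d) p * B.YC k l)
    rw [heval] at hint
    exact (congrArg (sInt μ) heval).trans (hrad k l (fun r => p.eval ((r : ℂ) ^ 2)) hint)

end Synthesis

theorem ext_component [NeZero d] {T T' : MvPolynomial (Fin d) ℂ →ₗ[ℂ] ℂ}
    (h : ∀ k l p, B.component T k l p = B.component T' k l p) : T = T' :=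
  LinearMap.ext_on_range B.span_gaussFamily_eq_top fun i => by
    simpa [component, gaussFamily] using h i.1.1 i.1.2 (Polynomial.X ^ i.2)

theorem component_eq_integral {T : MvPolynomial (Fin d) ℂ → ℂ}
    {σ : (k : ℕ) → Fin (B.a k) → Measure ℝ}
    (hrep : ∀ (f : MvPolynomial (Fin d) ℂ) (K : ℕ) (p : (k : ℕ) → Fin (B.a k) → Polynomial ℂ),
      B.GaussDecomp f K p →
      T f = ∑ k ∈ Finset.range (K + 1), ∑ l, ∫ r, (p k l).eval ((r : ℂ) ^ 2) ∂(σ k l))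
    (k : ℕ) (l : Fin (B.a k)) (p : Polynomial ℂ) :
    B.component T k l p = ∫ r, p.eval ((r : ℂ) ^ 2) ∂σ k l := by
  rw [component, hrep _ _ _ (B.gaussDecomp_single k l p),
    Finset.sum_eq_single_of_mem k (by simp) (fun k' _ hk' => by simp [hk']),
    Fintype.sum_eq_single l (fun l' hl' => by simp [hl'])]
  simp

end HarmonicBasis

theorem statement6 {d : ℕ} (hd : 1 ≤ d) (B : HarmonicBasis d)
    (T : MvPolynomial (Fin d) ℂ →ₗ[ℂ] ℂ) (hT : B.PPD T)
    (σ : (k : ℕ) → Fin (B.a k) → Measure ℝ)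
    (hpos : ∀ k l, (σ k l) (Set.Iio 0) = 0)
    (hrep : ∀ (f : MvPolynomial (Fin d) ℂ) (K : ℕ) (p : (k : ℕ) → Fin (B.a k) → Polynomial ℂ),
      B.GaussDecomp f K p →
      T f = ∑ k ∈ Finset.range (K + 1), ∑ l, ∫ r, (p k l).eval ((r : ℂ) ^ 2) ∂(σ k l))
    (hsum : B.SummCond σ) :
    ∃ μ : SignedMeasure (E d), B.PseudoPositive μ ∧ IsMomentMeasure μ ∧
      ∀ f : MvPolynomial (Fin d) ℂ, T f = sInt μ (evalC f) := by
  have : NeZero d := ⟨by omega⟩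
  obtain ⟨μ, hμ, hfam, hcomp⟩ := HarmonicBasis.exists_isMomentMeasure_isComponentFamily hpos hsum
  have hTμ : T = momentFunctional μ hμ := B.ext_component fun k l p => by
    rw [B.component_eq_integral hrep, hcomp]
  exact ⟨μ, hfam.pseudoPositive, hμ, fun f => by rw [hTμ]; rfl⟩
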